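/- arXiv:2401.15512 — 3 statements merged into one kernel-verified Lean document; each statement's English description precedes it below -/
import Mathlib

section
/- Let f be the higher energy function of order ℓ ≥ 0 and let N_k ≥ 1 (0 ≤ k ≤ ℓ) satisfy N_k = N_{ℓ−k} for all 0 ≤ k ≤ ℓ, with N = Σ_{k=0}^ℓ N_k ≥ 2. Then the unique MIW sequence (x_n)_{n=1}^N of f satisfying the left boundary condition at −∞ and the right boundary condition at +∞ with N_k points in region R_k is symmetric, in the sense that x_n = −x_{N−n+1} for all 1 ≤ n ≤ N. -/
/-!
The score `ψ = f'/f` of the higher energy function is odd, because `f` is even, and strictly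
decreasing on every interval free of zeros of `f`: as `p_l` is monic of degree `l` and has the `l`
distinct real zeros `r_i`, it equals `∏ (X - r_i)`, so `ψ(x) = 2 ∑ 1/(x - r_i) - x`
(`score_eq`, `score_lt`).

Put `y_n = -x_{N-n+1}`. Since `ψ` is odd, `y` solves the same recursion with the same boundary
conditions. Counting points to the left of `r_k` (`card_left`) together with `r_{l+1-k} = -r_k`
(`zero_symm`) and `N_k = N_{l-k}` shows that no zero of `f` separates `x_n` from `y_n`. Uniqueness
then follows from comparison (`not_first_lt`): if `x_1 < y_1`, monotonicity of `ψ` gives, by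
induction on `n`, that `x_n < y_n` and that every gap of `x` is smaller than the corresponding gap
of `y`, which contradicts the right boundary condition. Hence `x_1 = y_1`, and the recursion
determines the remaining points (`eq_of_first_eq`).
-/

open MeasureTheory Filter Set

noncomputable section

/-- The probabilists' Hermite polynomial `p_l(x) = (-1)^l e^{x^2/2} (d/dx)^l e^{-x^2/2}`
as a real function. -/
def hermiteFun (l : ℕ) (x : ℝ) : ℝ :=
  (-1 : ℝ) ^ l * Real.exp (x ^ 2 / 2) *
    iteratedDeriv l (fun t => Real.exp (-t ^ 2 / 2)) x

/-- The higher energy function of order `l` with normalizing constant `c`. -/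
def heFun (l : ℕ) (c : ℝ) (x : ℝ) : ℝ :=
  c * hermiteFun l x ^ 2 * Real.exp (-x ^ 2 / 2)

/-- `c` is the constant making `heFun l c` a probability density on `ℝ`. -/
def IsNormalizing (l : ℕ) (c : ℝ) : Prop :=
  0 < c ∧ (∫ x : ℝ, heFun l c x) = 1

/-- `(x n)_{n=1}^N` is an MIW sequence of `f` : strictly increasing, avoiding the
zeros of `f`, and satisfying the MIW recursion for `1 < n < N`. -/
def IsMIW (f : ℝ → ℝ) (N : ℕ) (x : ℕ → ℝ) : Prop :=
  (∀ n, 1 ≤ n → n < N → x n < x (n + 1)) ∧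
  (∀ n, 1 ≤ n → n ≤ N → f (x n) ≠ 0) ∧
  (∀ n, 1 < n → n < N →
    1 / (x (n + 1) - x n) - 1 / (x n - x (n - 1)) = deriv f (x n) / f (x n))

/-- Left boundary condition at `x_0 = -∞`. -/
def LeftBC (f : ℝ → ℝ) (x : ℕ → ℝ) : Prop :=
  1 / (x 2 - x 1) = deriv f (x 1) / f (x 1)

/-- Right boundary condition at `x_{N+1} = +∞`. -/
def RightBC (f : ℝ → ℝ) (N : ℕ) (x : ℕ → ℝ) : Prop :=
  -(1 / (x N - x (N - 1))) = deriv f (x N) / f (x N)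

/-- Right boundary condition at a point (`none` denoting `+∞`). -/
def RightBCAt (f : ℝ → ℝ) (N : ℕ) (x : ℕ → ℝ) : Option ℝ → Prop
  | none => -(1 / (x N - x (N - 1))) = deriv f (x N) / f (x N)
  | some b => x N < b ∧
      1 / (b - x N) - 1 / (x N - x (N - 1)) = deriv f (x N) / f (x N)

/-- `r 1 < ⋯ < r l` enumerates the zeros of `f`. -/
def ZeroEnum (f : ℝ → ℝ) (l : ℕ) (r : ℕ → ℝ) : Prop :=
  (∀ i j, 1 ≤ i → i < j → j ≤ l → r i < r j) ∧
  {y : ℝ | f y = 0} = r '' Set.Icc 1 l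

/-- Membership in the region `R_k = (r_k, r_{k+1})`, with the conventions
`r_0 = -∞` and `r_{l+1} = +∞`. -/
def InRegion (l : ℕ) (r : ℕ → ℝ) (k : ℕ) (t : ℝ) : Prop :=
  (k = 0 ∨ r k < t) ∧ (k = l ∨ t < r (k + 1))

/-- The region `R_k` as a subset of `ℝ`. -/
def regionSet (l : ℕ) (r : ℕ → ℝ) (k : ℕ) : Set ℝ := {t | InRegion l r k t}

/-- The number of points of `(x n)_{n=1}^N` lying in region `R_k`. -/
def regionCount (l : ℕ) (r : ℕ → ℝ) (N : ℕ) (x : ℕ → ℝ) (k : ℕ) : ℕ :=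
  Set.ncard {n : ℕ | n ∈ Set.Icc 1 N ∧ InRegion l r k (x n)}

/-- `n(t) = max {0 ≤ k ≤ N : x_k ≤ t}` (convention `x_0 = -∞`); for an increasing
sequence this is the number of points among `x_1, …, x_N` that are `≤ t`. -/
def nIdx (N : ℕ) (x : ℕ → ℝ) (t : ℝ) : ℕ :=
  Set.ncard {n : ℕ | n ∈ Set.Icc 1 N ∧ x n ≤ t}

/-- `1/(x_{n+1}-x_n) - 1/(x_n-x_{n-1})`, with the conventions `x_0 = -∞`,
`x_{N+1} = +∞` (so the corresponding reciprocals vanish). -/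
def gapTerm (N : ℕ) (x : ℕ → ℝ) (n : ℕ) : ℝ :=
  (if n < N then 1 / (x (n + 1) - x n) else 0) -
    (if 1 < n then 1 / (x n - x (n - 1)) else 0)

/-- The MIW energy `H(x_1,…,x_N)`. -/
def Hfun (N : ℕ) (x : ℕ → ℝ) : ℝ :=
  ∑ n ∈ Finset.Icc 1 N, x n ^ 2 + ∑ n ∈ Finset.Icc 1 N, gapTerm N x n ^ 2

/-- Partial derivative `∂H/∂x_n` evaluated at the configuration `x`. -/
def partialH (N : ℕ) (x : ℕ → ℝ) (n : ℕ) : ℝ :=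
  deriv (fun s => Hfun N (Function.update x n s)) (x n)

/-- The empirical distribution `(1/N) ∑_{n=1}^N δ_{x_n}`. -/
def empDist (N : ℕ) (x : ℕ → ℝ) : Measure ℝ :=
  (N : ENNReal)⁻¹ • ∑ n ∈ Finset.Icc 1 N, Measure.dirac (x n)

/-- The probability measure on `S` with density proportional to `f`. -/
def densMeasure (f : ℝ → ℝ) (S : Set ℝ) : Measure ℝ :=
  (volume.restrict S).withDensity fun t => ENNReal.ofReal (f t / ∫ u in S, f u)

/-- The Stein solution `g_h(x) = (1/f(x)) ∫_a^x f(t)(h(t) - E_P[h]) dt`, where the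
integral runs over the part of `S` to the left of `x`. -/
def steinG (f : ℝ → ℝ) (S : Set ℝ) (h : ℝ → ℝ) (x : ℝ) : ℝ :=
  (1 / f x) * ∫ t in S ∩ Set.Iio x, f t * (h t - ∫ s, h s ∂(densMeasure f S))

/-- The intermediate density `ρ(t) = 1/((N-1)(x_{n(t)+1} - x_{n(t)}))` on `(x_1, x_N)`. -/
def interDens (N : ℕ) (x : ℕ → ℝ) (t : ℝ) : ℝ :=
  Set.indicator (Set.Ioo (x 1) (x N))
    (fun u => 1 / (((N : ℝ) - 1) * (x (nIdx N x u + 1) - x (nIdx N x u)))) t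

/-- The intermediate distribution `R` with density `ρ`. -/
def interDist (N : ℕ) (x : ℕ → ℝ) : Measure ℝ :=
  volume.withDensity fun t => ENNReal.ofReal (interDens N x t)

/-! ### Comparison of solutions of the recursion -/

/-- One-sided comparison for two solutions of the recursion, for any score `ψ` that decreases from
the smaller to the larger of `x n`, `y n`. -/
lemma not_first_lt (ψ : ℝ → ℝ) (N : ℕ) (hN : 2 ≤ N) (x y : ℕ → ℝ)
    (hxm : ∀ n, 1 ≤ n → n < N → x n < x (n + 1))
    (hym : ∀ n, 1 ≤ n → n < N → y n < y (n + 1))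
    (hx : ∀ n, 1 < n → n < N → 1 / (x (n + 1) - x n) - 1 / (x n - x (n - 1)) = ψ (x n))
    (hy : ∀ n, 1 < n → n < N → 1 / (y (n + 1) - y n) - 1 / (y n - y (n - 1)) = ψ (y n))
    (hxl : 1 / (x 2 - x 1) = ψ (x 1)) (hyl : 1 / (y 2 - y 1) = ψ (y 1))
    (hxr : -(1 / (x N - x (N - 1))) = ψ (x N)) (hyr : -(1 / (y N - y (N - 1))) = ψ (y N))
    (hψ : ∀ n, 1 ≤ n → n ≤ N → x n < y n → ψ (y n) < ψ (x n)) : ¬ x 1 < y 1 := by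
  intro h1
  have key : ∀ n, 1 ≤ n → n < N →
      x n < y n ∧ 1 / (y (n + 1) - y n) < 1 / (x (n + 1) - x n) := by
    intro n hn
    induction n, hn using Nat.le_induction with
    | base =>
      intro _
      refine ⟨h1, ?_⟩
      have := hψ 1 le_rfl (by omega) h1
      rw [show (1 + 1 : ℕ) = 2 from rfl, hxl, hyl]
      exact this
    | succ n hn ih =>
      intro hlt
      obtain ⟨ha, hb⟩ := ih (by omega)
      have hg := (one_div_lt_one_div (sub_pos.2 (hym n hn (by omega)))
        (sub_pos.2 (hxm n hn (by omega)))).1 hb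
      have hc : x (n + 1) < y (n + 1) := by linarith
      refine ⟨hc, ?_⟩
      have e1 := hx (n + 1) (by omega) hlt
      have e2 := hy (n + 1) (by omega) hlt
      have e3 := hψ (n + 1) (by omega) hlt.le hc
      simp only [Nat.add_sub_cancel] at e1 e2
      linarith
  obtain ⟨m, rfl⟩ : ∃ m, N = m + 1 := ⟨N - 1, by omega⟩
  obtain ⟨ha, hb⟩ := key m (by omega) (by omega)
  have hg := (one_div_lt_one_div (sub_pos.2 (hym m (by omega) (by omega)))
    (sub_pos.2 (hxm m (by omega) (by omega)))).1 hb
  have e3 := hψ (m + 1) (by omega) le_rfl (by linarith)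
  simp only [Nat.add_sub_cancel] at hxr hyr
  linarith

/-- Each gap is determined by the previous gap and the current point, so two solutions with the same
first point agree. -/
lemma eq_of_first_eq (ψ : ℝ → ℝ) (N : ℕ) (x y : ℕ → ℝ)
    (hx : ∀ n, 1 < n → n < N → 1 / (x (n + 1) - x n) - 1 / (x n - x (n - 1)) = ψ (x n))
    (hy : ∀ n, 1 < n → n < N → 1 / (y (n + 1) - y n) - 1 / (y n - y (n - 1)) = ψ (y n))
    (hxl : 1 / (x 2 - x 1) = ψ (x 1)) (hyl : 1 / (y 2 - y 1) = ψ (y 1))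
    (h1 : x 1 = y 1) : ∀ n, 1 ≤ n → n ≤ N → x n = y n := by
  have inj : ∀ a b u v : ℝ, 1 / (a - u) = 1 / (b - v) → u = v → a = b := by
    intro a b u v h huv
    rw [one_div, one_div, inv_inj] at h
    linarith
  have key : ∀ n, 1 ≤ n → n < N → x n = y n ∧ x (n + 1) = y (n + 1) := by
    intro n hn
    induction n, hn using Nat.le_induction with
    | base =>
      intro _
      exact ⟨h1, inj _ _ _ _ (by rw [hxl, hyl, h1]) h1⟩
    | succ n hn ih =>
      intro hlt
      obtain ⟨ha, hb⟩ := ih (by omega)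
      refine ⟨hb, inj _ _ _ _ ?_ hb⟩
      have e1 := hx (n + 1) (by omega) hlt
      have e2 := hy (n + 1) (by omega) hlt
      simp only [Nat.add_sub_cancel] at e1 e2
      rw [ha, hb] at e1
      rw [hb]
      linarith
  intro n hn hnN
  rcases Nat.lt_or_ge n N with h | h
  · exact (key n hn h).1
  · obtain rfl : n = N := le_antisymm hnN h
    rcases Nat.eq_or_lt_of_le hn with h' | h'
    · rw [← h']; exact h1
    · have := (key (n - 1) (by omega) (by omega)).2
      rwa [Nat.sub_add_cancel hn] at this

/-! ### Parity and monotonicity of the score -/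

lemma heFun_neg (l : ℕ) (c x : ℝ) : heFun l c (-x) = heFun l c x := by
  have h := iteratedDeriv_comp_neg l (fun t : ℝ => Real.exp (-t ^ 2 / 2)) x
  simp only [neg_sq, smul_eq_mul] at h
  unfold heFun hermiteFun
  rw [h]
  rcases neg_one_pow_eq_or ℝ l with h1 | h1 <;> rw [h1] <;> simp only [neg_sq] <;> ring

/-- The score `f'/f` is odd. -/
lemma score_neg (l : ℕ) (c x : ℝ) :
    deriv (heFun l c) (-x) / heFun l c (-x) = -(deriv (heFun l c) x / heFun l c x) := by
  have h := deriv_comp_neg (heFun l c) x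
  simp only [heFun_neg] at h
  rw [heFun_neg, h]
  ring

/-- `hermiteFun` is evaluation of the Hermite polynomial of Mathlib. -/
lemma hermiteFun_eq (l : ℕ) (x : ℝ) :
    hermiteFun l x = ((Polynomial.hermite l).map (Int.castRingHom ℝ)).eval x := by
  have h := Polynomial.hermite_eq_deriv_gaussian l x
  rw [Polynomial.eval_map, ← algebraMap_int_eq, ← Polynomial.aeval_def, h]
  unfold hermiteFun
  have e : (fun t : ℝ => Real.exp (-t ^ 2 / 2)) = fun y => Real.exp (-(y ^ 2 / 2)) := by
    funext t; rw [neg_div]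
  rw [iteratedDeriv_eq_iterate, e, Real.exp_neg (x ^ 2 / 2)]
  field_simp

lemma r_inj {l : ℕ} {c : ℝ} {r : ℕ → ℝ} (hr : ZeroEnum (heFun l c) l r) :
    Set.InjOn r (Finset.Icc 1 l) := by
  intro i hi j hj hij
  simp only [Finset.coe_Icc, Set.mem_Icc] at hi hj
  rcases lt_trichotomy i j with h | h | h
  · exact absurd hij (hr.1 i j hi.1 h hj.2).ne
  · exact h
  · exact absurd hij.symm (hr.1 j i hj.1 h hi.2).ne

lemma heFun_zero_iff {l : ℕ} {c : ℝ} (hc : 0 < c) (x : ℝ) :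
    heFun l c x = 0 ↔ hermiteFun l x = 0 := by
  simp [heFun, hc.ne', (Real.exp_pos _).ne']

/-- A monic polynomial of degree `l` with `l` distinct roots is the product of its linear factors. -/
lemma hermiteFun_prod {l : ℕ} {c : ℝ} (hc : 0 < c) {r : ℕ → ℝ}
    (hr : ZeroEnum (heFun l c) l r) (x : ℝ) :
    hermiteFun l x = ∏ i ∈ Finset.Icc 1 l, (x - r i) := by
  set p := (Polynomial.hermite l).map (Int.castRingHom ℝ) with hp
  have hm : p.Monic := (Polynomial.hermite_monic l).map _
  have hdeg : p.natDegree = l := by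
    rw [hp, (Polynomial.hermite_monic l).natDegree_map, Polynomial.natDegree_hermite]
  set Z := (Finset.Icc 1 l).image r with hZ
  have hcard : Z.card = l := by
    rw [hZ, Finset.card_image_of_injOn (r_inj hr)]; simp
  have hle : Z.val ≤ p.roots := by
    rw [Multiset.le_iff_subset Z.nodup]
    intro z hz
    rw [Polynomial.mem_roots hm.ne_zero, Polynomial.IsRoot.def, hp, ← hermiteFun_eq,
      ← heFun_zero_iff hc]
    have hz' : z ∈ Z := hz
    rw [hZ, Finset.mem_image] at hz'
    obtain ⟨i, hi, rfl⟩ := hz'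
    have : r i ∈ {y : ℝ | heFun l c y = 0} := by
      rw [hr.2]; exact ⟨i, by simpa using hi, rfl⟩
    exact this
  have heq : Z.val = p.roots := by
    apply Multiset.eq_of_le_of_card_le hle
    rw [Finset.card_val, hcard, ← hdeg]
    exact p.card_roots'
  have hprod := Polynomial.prod_multiset_X_sub_C_of_monic_of_roots_card_eq hm
    (by rw [← heq, Finset.card_val, hcard, hdeg])
  rw [hermiteFun_eq, ← hp, ← hprod, ← heq]
  change Polynomial.eval x (∏ a ∈ Z, (Polynomial.X - Polynomial.C a)) = _
  rw [hZ, Finset.prod_image (r_inj hr), Polynomial.eval_prod]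
  simp

lemma score_eq {l : ℕ} {c : ℝ} (hc : 0 < c) {r : ℕ → ℝ}
    (hr : ZeroEnum (heFun l c) l r) (x : ℝ) (hx : heFun l c x ≠ 0) :
    deriv (heFun l c) x / heFun l c x = 2 * ∑ i ∈ Finset.Icc 1 l, 1 / (x - r i) - x := by
  have hne : ∀ i ∈ Finset.Icc 1 l, x - r i ≠ 0 := by
    rw [Ne, heFun_zero_iff hc, hermiteFun_prod hc hr, Finset.prod_eq_zero_iff] at hx
    push Not at hx
    exact hx
  have hP : HasDerivAt (fun t => ∏ i ∈ Finset.Icc 1 l, (t - r i))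
      ((∏ i ∈ Finset.Icc 1 l, (x - r i)) * ∑ i ∈ Finset.Icc 1 l, 1 / (x - r i)) x := by
    have h := HasDerivAt.fun_finsetProd (u := Finset.Icc 1 l) (f := fun i t => t - r i)
      (f' := fun _ => (1 : ℝ)) (x := x) (fun i _ => (hasDerivAt_id x).sub_const (r i))
    refine h.congr_deriv ?_
    rw [Finset.mul_sum]
    refine Finset.sum_congr rfl fun i hi => ?_
    rw [← Finset.mul_prod_erase _ _ hi, smul_eq_mul]
    have := hne i hi
    field_simp
  have hE : HasDerivAt (fun t : ℝ => Real.exp (-t ^ 2 / 2)) (Real.exp (-x ^ 2 / 2) * (-x)) x := by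
    have h : HasDerivAt (fun t : ℝ => -t ^ 2 / 2) (-x) x := by
      refine ((hasDerivAt_pow 2 x).fun_neg.div_const 2).congr_deriv ?_
      norm_num
      ring
    exact h.exp
  have hf : heFun l c = fun t => c * (∏ i ∈ Finset.Icc 1 l, (t - r i)) ^ 2 *
      Real.exp (-t ^ 2 / 2) := by
    funext t; rw [heFun, hermiteFun_prod hc hr]
  have hF := ((hP.pow 2).const_mul c).mul hE
  have hd : deriv (heFun l c) x = heFun l c x *
      (2 * ∑ i ∈ Finset.Icc 1 l, 1 / (x - r i) - x) := by
    rw [hf]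
    refine HasDerivAt.deriv (hF.congr_deriv ?_)
    simp only [Pi.pow_apply]
    push_cast
    ring
  rw [hd, mul_div_cancel_left₀ _ hx]

/-- The score is strictly decreasing between consecutive zeros: each `1/(t - r_i)` decreases on
either side of `r_i`, and `-t` makes the decrease strict. -/
lemma score_lt {l : ℕ} {c : ℝ} (hc : 0 < c) {r : ℕ → ℝ}
    (hr : ZeroEnum (heFun l c) l r) {a b : ℝ} (hab : a < b)
    (ha : heFun l c a ≠ 0) (hb : heFun l c b ≠ 0)
    (hsep : ∀ i, 1 ≤ i → i ≤ l → ¬ (a < r i ∧ r i < b)) :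
    deriv (heFun l c) b / heFun l c b < deriv (heFun l c) a / heFun l c a := by
  rw [score_eq hc hr a ha, score_eq hc hr b hb]
  have : ∑ i ∈ Finset.Icc 1 l, 1 / (b - r i) ≤ ∑ i ∈ Finset.Icc 1 l, 1 / (a - r i) := by
    refine Finset.sum_le_sum fun i hi => ?_
    have hz : heFun l c (r i) = 0 := by
      have : r i ∈ {y : ℝ | heFun l c y = 0} := by
        rw [hr.2]; exact ⟨i, by simpa using hi, rfl⟩
      exact this
    have h1 : a ≠ r i := fun h => ha (h ▸ hz)
    have h2 : b ≠ r i := fun h => hb (h ▸ hz)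
    rw [Finset.mem_Icc] at hi
    rcases lt_or_gt_of_ne h1 with h | h
    · have h3 : b < r i := by
        by_contra hcon
        exact hsep i hi.1 hi.2 ⟨h, lt_of_le_of_ne (not_lt.1 hcon) h2.symm⟩
      exact one_div_le_one_div_of_neg_of_le (by linarith) (by linarith)
    · exact one_div_le_one_div_of_le (by linarith) (by linarith)
  linarith

/-! ### Symmetry of the zeros and positions of the points -/

/-- The enumeration of the symmetric zero set is antisymmetric, since a finite set has only one
increasing enumeration. -/
lemma zero_symm {l : ℕ} {c : ℝ} {r : ℕ → ℝ} (hr : ZeroEnum (heFun l c) l r)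
    (k : ℕ) (hk : 1 ≤ k) (hkl : k ≤ l) : r (l + 1 - k) = -r k := by
  have h1 : StrictMono (fun i : Fin l => r (i + 1)) := by
    intro i j hij
    have : (i : ℕ) < j := hij
    exact hr.1 _ _ (by omega) (by omega) (by omega)
  have h2 : StrictMono (fun i : Fin l => -r (l - i)) := by
    intro i j hij
    have : (i : ℕ) < j := hij
    exact neg_lt_neg (hr.1 _ _ (by omega) (by omega) (by omega))
  have hZ : ∀ y, heFun l c y = 0 ↔ ∃ i, (1 ≤ i ∧ i ≤ l) ∧ r i = y := by
    intro y
    have := Set.ext_iff.1 hr.2 y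
    simpa using this
  have hrange : Set.range (fun i : Fin l => r (i + 1)) = Set.range (fun i : Fin l => -r (l - i)) := by
    have e1 : Set.range (fun i : Fin l => r (i + 1)) = {y | heFun l c y = 0} := by
      ext y
      rw [Set.mem_ofPred_eq, hZ]
      constructor
      · rintro ⟨i, rfl⟩
        exact ⟨i + 1, by omega, rfl⟩
      · rintro ⟨i, hi, rfl⟩
        exact ⟨⟨i - 1, by omega⟩, congrArg r (by simp only; omega)⟩
    have e2 : Set.range (fun i : Fin l => -r (l - i)) = {y | heFun l c y = 0} := by
      ext y
      rw [Set.mem_ofPred_eq, ← heFun_neg, hZ]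
      constructor
      · rintro ⟨i, rfl⟩
        exact ⟨l - i, by omega, by simp⟩
      · rintro ⟨i, hi, h⟩
        refine ⟨⟨l - i, by omega⟩, ?_⟩
        simp only
        rw [show l - (l - i) = i by omega, h, neg_neg]
    rw [e1, e2]
  have := congrFun ((h1.range_inj h2).1 hrange) ⟨k - 1, by omega⟩
  simp only at this
  rw [show k - 1 + 1 = k by omega, show l - (k - 1) = l + 1 - k by omega] at this
  rw [this, neg_neg]

/-- The points left of `r_k` are exactly those in the regions `R_0, …, R_{k-1}`. -/
lemma card_left {l : ℕ} {c : ℝ} {r : ℕ → ℝ} (hr : ZeroEnum (heFun l c) l r)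
    {N : ℕ} {x : ℕ → ℝ} (hne : ∀ n, 1 ≤ n → n ≤ N → heFun l c (x n) ≠ 0)
    {Nk : ℕ → ℕ} (hcount : ∀ k ≤ l, regionCount l r N x k = Nk k)
    (k : ℕ) (hk : 1 ≤ k) (hkl : k ≤ l) :
    ({n : ℕ | n ∈ Set.Icc 1 N ∧ x n < r k}).ncard = ∑ j ∈ Finset.range k, Nk j := by
  have fin : ∀ P : ℕ → Prop, ({n : ℕ | n ∈ Set.Icc 1 N ∧ P n}).Finite := fun P =>
    (Set.finite_Icc 1 N).subset fun n hn => hn.1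
  have hz : ∀ i, 1 ≤ i → i ≤ l → heFun l c (r i) = 0 := by
    intro i hi hil
    have : r i ∈ {y : ℝ | heFun l c y = 0} := by rw [hr.2]; exact ⟨i, ⟨hi, hil⟩, rfl⟩
    exact this
  induction k, hk using Nat.le_induction with
  | base =>
    rw [Finset.sum_range_one, ← hcount 0 (Nat.zero_le _), regionCount]
    congr 1
    ext n
    simp only [InRegion, Set.mem_ofPred_eq]
    have : ¬ 0 = l := by omega
    simp [this]
  | succ k hk ih =>
    rw [Finset.sum_range_succ, ← ih (by omega), ← hcount k (by omega), regionCount,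
      ← Set.ncard_union_eq _ (fin _) (fin _)]
    · congr 1
      ext n
      simp only [InRegion, Set.mem_ofPred_eq, Set.mem_union]
      have h0 : ¬ k = 0 := by omega
      have hl : ¬ k = l := by omega
      have hlt := hr.1 k (k + 1) hk (by omega) hkl
      simp only [h0, hl, false_or]
      constructor
      · rintro ⟨hn, h⟩
        rcases lt_trichotomy (x n) (r k) with h' | h' | h'
        · exact Or.inl ⟨hn, h'⟩
        · exact absurd (h' ▸ hz k hk (by omega)) (hne n hn.1 hn.2)
        · exact Or.inr ⟨hn, h', h⟩
      · rintro (⟨hn, h⟩ | ⟨hn, _, h⟩)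
        · exact ⟨hn, h.trans hlt⟩
        · exact ⟨hn, h⟩
    · rw [Set.disjoint_left]
      rintro n ⟨_, h⟩ ⟨_, h', _⟩
      rcases h' with h' | h'
      · omega
      · exact lt_asymm h h'

/-! ### Symmetry of the sequence -/

theorem MIW_sequence_symmetric (l : ℕ) (c : ℝ) (hc : IsNormalizing l c)
    (r : ℕ → ℝ) (hr : ZeroEnum (heFun l c) l r)
    (Nk : ℕ → ℕ) (hNk : ∀ k ≤ l, 1 ≤ Nk k)
    (hsym : ∀ k ≤ l, Nk k = Nk (l - k))
    (N : ℕ) (hN : N = ∑ k ∈ Finset.range (l + 1), Nk k) (hN2 : 2 ≤ N)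
    (x : ℕ → ℝ)
    (hx : IsMIW (heFun l c) N x) (hlb : LeftBC (heFun l c) x)
    (hrb : RightBC (heFun l c) N x)
    (hcount : ∀ k ≤ l, regionCount l r N x k = Nk k) :
    ∀ n, 1 ≤ n → n ≤ N → x n = -(x (N - n + 1)) := by
  obtain ⟨hxm, hxne, hxrec⟩ := hx
  have hc0 := hc.1
  set ψ : ℝ → ℝ := fun t => deriv (heFun l c) t / heFun l c t with hψdef
  have hodd : ∀ t, ψ (-t) = -ψ t := score_neg l c
  set y : ℕ → ℝ := fun n => -(x (N - n + 1)) with hy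
  have hmono : ∀ m n, 1 ≤ m → m ≤ n → n ≤ N → x m ≤ x n := by
    intro m n hm hmn
    induction n, hmn using Nat.le_induction with
    | base => intro _; exact le_rfl
    | succ n hmn ih => intro h; exact (ih (by omega)).trans (hxm n (by omega) (by omega)).le
  -- `x_1, …, x_S` with `S = N_0 + ⋯ + N_{k-1}` are the points left of `r_k`.
  have hpos : ∀ k, 1 ≤ k → k ≤ l → ∀ n, 1 ≤ n → n ≤ N →
      (x n < r k → n ≤ ∑ j ∈ Finset.range k, Nk j) ∧
      (r k < x n → ∑ j ∈ Finset.range k, Nk j < n) := by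
    intro k hk hkl n hn hnN
    rw [← card_left hr hxne hcount k hk hkl]
    constructor
    · intro h
      have hsub : Set.Icc 1 n ⊆ {m : ℕ | m ∈ Set.Icc 1 N ∧ x m < r k} := fun m hm =>
        ⟨⟨hm.1, hm.2.trans hnN⟩, (hmono m n hm.1 hm.2 hnN).trans_lt h⟩
      have := Set.ncard_le_ncard hsub ((Set.finite_Icc 1 N).subset fun m hm => hm.1)
      simpa [← Finset.coe_Icc, Set.ncard_coe_finset] using this
    · intro h
      have hsub : {m : ℕ | m ∈ Set.Icc 1 N ∧ x m < r k} ⊆ Set.Icc 1 (n - 1) := by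
        rintro m ⟨hm, hlt⟩
        refine ⟨hm.1, ?_⟩
        by_contra hcon
        exact absurd (hmono n m hn (by omega) hm.2) (hlt.trans h).not_ge
      have := Set.ncard_le_ncard hsub (Set.finite_Icc _ _)
      rw [← Finset.coe_Icc 1 (n - 1), Set.ncard_coe_finset, Nat.card_Icc] at this
      omega
  have hS : ∀ k, 1 ≤ k → k ≤ l → ∑ j ∈ Finset.range k, Nk j +
      ∑ j ∈ Finset.range (l + 1 - k), Nk j = N := by
    intro k hk hkl
    rw [hN]
    conv_rhs => rw [show l + 1 = k + (l + 1 - k) by omega, Finset.sum_range_add]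
    congr 1
    rw [← Finset.sum_range_reflect]
    refine Finset.sum_congr rfl fun i hi => ?_
    rw [Finset.mem_range] at hi
    rw [hsym (k + i) (by omega)]
    congr 1
    omega
  have hyne : ∀ n, 1 ≤ n → n ≤ N → heFun l c (y n) ≠ 0 := by
    intro n hn hnN
    simp only [hy, heFun_neg]
    exact hxne _ (by omega) (by omega)
  have hψ1 : ∀ n, 1 ≤ n → n ≤ N → x n < y n → ψ (y n) < ψ (x n) := by
    intro n hn hnN hlt
    refine score_lt hc0 hr hlt (hxne n hn hnN) (hyne n hn hnN) ?_
    rintro k hk hkl ⟨h1, h2⟩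
    have a1 := (hpos k hk hkl n hn hnN).1 h1
    have a2 := (hpos (l + 1 - k) (by omega) (by omega) (N - n + 1) (by omega) (by omega)).1
      (by rw [zero_symm hr k hk hkl]; simp only [hy] at h2; linarith)
    have := hS k hk hkl
    omega
  have hψ2 : ∀ n, 1 ≤ n → n ≤ N → y n < x n → ψ (x n) < ψ (y n) := by
    intro n hn hnN hlt
    refine score_lt hc0 hr hlt (hyne n hn hnN) (hxne n hn hnN) ?_
    rintro k hk hkl ⟨h1, h2⟩
    have a1 := (hpos k hk hkl n hn hnN).2 h2
    have a2 := (hpos (l + 1 - k) (by omega) (by omega) (N - n + 1) (by omega) (by omega)).2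
      (by rw [zero_symm hr k hk hkl]; simp only [hy] at h1; linarith)
    have := hS k hk hkl
    omega
  have hym : ∀ n, 1 ≤ n → n < N → y n < y (n + 1) := by
    intro n hn hnN
    have := hxm (N - n) (by omega) (by omega)
    simp only [hy]
    rw [show N - (n + 1) + 1 = N - n by omega]
    linarith
  have hyrec : ∀ n, 1 < n → n < N →
      1 / (y (n + 1) - y n) - 1 / (y n - y (n - 1)) = ψ (y n) := by
    intro n hn hnN
    have := hxrec (N - n + 1) (by omega) (by omega)
    simp only [hy, hodd]
    rw [show N - (n + 1) + 1 = N - n by omega, show N - (n - 1) + 1 = N - n + 1 + 1 by omega]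
    rw [Nat.add_sub_cancel] at this
    simp only [hψdef, ← this, neg_sub_neg, neg_sub]
  have hyl : 1 / (y 2 - y 1) = ψ (y 1) := by
    simp only [hy, hodd]
    rw [show N - 2 + 1 = N - 1 by omega, show N - 1 + 1 = N by omega, neg_sub_neg]
    have : -(1 / (x N - x (N - 1))) = ψ (x N) := hrb
    linarith
  have hyr : -(1 / (y N - y (N - 1))) = ψ (y N) := by
    simp only [hy, hodd]
    rw [show N - N + 1 = 1 by omega, show N - (N - 1) + 1 = 2 by omega, neg_sub_neg]
    have : 1 / (x 2 - x 1) = ψ (x 1) := hlb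
    linarith
  refine eq_of_first_eq ψ N x y hxrec hyrec hlb hyl ?_
  exact le_antisymm
    (not_lt.1 (not_first_lt ψ N hN2 y x hym hxm hyrec hxrec hyl hlb hyr hrb hψ2))
    (not_lt.1 (not_first_lt ψ N hN2 x y hxm hym hxrec hyrec hlb hyl hrb hyr hψ1))
end
end

section
/- Let f be the higher energy function of order ℓ ≥ 0 with zeros r_1 < ⋯ < r_ℓ (set r_0 = −∞, r_{ℓ+1} = +∞). Let (x_n)_{n=1}^N and (y_n)_{n=1}^N be two N-element MIW sequences of f satisfying the left boundary condition at −∞ (and satisfying right boundary conditions at some points x_{N+1} and y_{N+1} respectively), such that for every 0 ≤ k ≤ ℓ both sequences have the same number N_k ≥ 1 of points in (r_k, r_{k+1}). If x_1 < y_1, then x_{n+1} − x_n < y_{n+1} − y_n for all 1 ≤ n < N, and consequently x_n < y_n for all 1 ≤ n ≤ N. If instead x_1 = y_1, then x_n = y_n for all 1 ≤ n ≤ N. -/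
/-!
The logarithmic derivative `f'/f` of the higher energy function is `∑ᵢ 2 / (t - rᵢ) - t`: the
Hermite polynomial is monic of degree `l` and the enumeration hypothesis supplies `l` distinct
real zeros, so it equals `∏ᵢ (t - rᵢ)` (`hermiteFun_eq_prod`). Hence `f'(b)/f(b) < f'(a)/f(a)`
whenever `a < b` and no zero separates `a` from `b` (`ratio_lt`).

The points `x n` and `y n` are never separated by a zero: the number of indices `n` with
`x n < rᵢ` is the sum of the first `i` region counts, hence the same for `y`; as both index sets
are initial segments of `{1, …, N}`, they coincide (`lt_zero_iff`).

Since `1/(x_{n+1} - x_n) = 1/(x_n - x_{n-1}) + f'(x_n)/f(x_n)`, induction on `n` propagates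
`x_n < y_n` together with the strict comparison of the gaps, and likewise propagates equality.
-/


open MeasureTheory Filter Set

noncomputable section

lemma hermiteFun_eq_eval (l : ℕ) (x : ℝ) :
    hermiteFun l x = ((Polynomial.hermite l).map (algebraMap ℤ ℝ)).eval x := by
  have e : (fun t : ℝ => Real.exp (-t ^ 2 / 2)) = fun y => Real.exp (-(y ^ 2 / 2)) := by
    funext t; congr 1; ring
  rw [Polynomial.eval_map_algebraMap, Polynomial.hermite_eq_deriv_gaussian', hermiteFun, e,
    iteratedDeriv_eq_iterate]
  ring

lemma heFun_eq_zero_iff_hermiteFun {l : ℕ} {c : ℝ} (hc : 0 < c) (t : ℝ) :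
    heFun l c t = 0 ↔ hermiteFun l t = 0 := by
  simp [heFun, hc.ne', (Real.exp_pos _).ne']

lemma heFun_eq_zero_iff {l : ℕ} {c : ℝ} {r : ℕ → ℝ} (hr : ZeroEnum (heFun l c) l r) (t : ℝ) :
    heFun l c t = 0 ↔ ∃ i ∈ Finset.Icc 1 l, r i = t := by
  have : t ∈ {y : ℝ | heFun l c y = 0} ↔ t ∈ r '' Set.Icc 1 l := by rw [hr.2]
  simpa using this

/-- A monic polynomial of degree `l` with `l` distinct roots is the product of its linear
factors, so real-rootedness of the Hermite polynomial is read off from the enumeration. -/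
lemma hermiteFun_eq_prod {l : ℕ} {c : ℝ} (hc : 0 < c) {r : ℕ → ℝ}
    (hr : ZeroEnum (heFun l c) l r) (t : ℝ) :
    hermiteFun l t = ∏ i ∈ Finset.Icc 1 l, (t - r i) := by
  set p := (Polynomial.hermite l).map (algebraMap ℤ ℝ) with hp
  have hm : p.Monic := (Polynomial.hermite_monic l).map _
  have hd : p.natDegree = l := by
    rw [hp, (Polynomial.hermite_monic l).natDegree_map, Polynomial.natDegree_hermite]
  have hinj : Set.InjOn r (Finset.Icc 1 l : Finset ℕ) := by
    intro i hi j hj hij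
    simp only [Finset.coe_Icc, Set.mem_Icc] at hi hj
    rcases lt_trichotomy i j with h | h | h
    · exact absurd hij (hr.1 i j hi.1 h hj.2).ne
    · exact h
    · exact absurd hij (hr.1 j i hj.1 h hi.2).ne'
  have hle : ((Finset.Icc 1 l).image r).val ≤ p.roots := by
    rw [Multiset.le_iff_subset (Finset.nodup _)]
    intro a ha
    have ha' : ∃ i ∈ Finset.Icc 1 l, r i = a := Finset.mem_image.1 ha
    rw [Polynomial.mem_roots hm.ne_zero, Polynomial.IsRoot.def, ← hermiteFun_eq_eval,
      ← heFun_eq_zero_iff_hermiteFun hc, heFun_eq_zero_iff hr]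
    exact ha'
  have hcard : ((Finset.Icc 1 l).image r).val.card = l := by
    rw [Finset.card_val, Finset.card_image_of_injOn hinj]; simp
  have hroots : ((Finset.Icc 1 l).image r).val = p.roots := by
    apply Multiset.eq_of_le_of_card_le hle
    rw [hcard, ← hd]
    exact Polynomial.card_roots' p
  have hprod : p = ∏ i ∈ Finset.Icc 1 l, (Polynomial.X - Polynomial.C (r i)) := by
    rw [← Polynomial.prod_multiset_X_sub_C_of_monic_of_roots_card_eq hm
      (by rw [← hroots, hcard, hd]), ← hroots, ← Finset.prod_image
      (f := fun a => Polynomial.X - Polynomial.C a) hinj]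
    rfl
  rw [hermiteFun_eq_eval, ← hp, hprod, Polynomial.eval_prod]
  simp

lemma ratio_eq {l : ℕ} {c : ℝ} (hc : 0 < c) {r : ℕ → ℝ}
    (hr : ZeroEnum (heFun l c) l r) {t : ℝ} (ht : heFun l c t ≠ 0) :
    deriv (heFun l c) t / heFun l c t = 2 * ∑ i ∈ Finset.Icc 1 l, 1 / (t - r i) - t := by
  have hne : ∀ i ∈ Finset.Icc 1 l, t - r i ≠ 0 := fun i hi h =>
    ht ((heFun_eq_zero_iff hr t).2 ⟨i, hi, by linarith⟩)
  have hf : heFun l c = fun z => c * ((∏ i ∈ Finset.Icc 1 l, (z - r i)) ^ 2 *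
      Real.exp (-z ^ 2 / 2)) := by
    funext z; rw [heFun, hermiteFun_eq_prod hc hr]; ring
  have hdp : DifferentiableAt ℝ (fun z => ∏ i ∈ Finset.Icc 1 l, (z - r i)) t := by fun_prop
  have hexp : logDeriv (fun z : ℝ => Real.exp (-z ^ 2 / 2)) t = -t := by
    have h : HasDerivAt (fun z : ℝ => Real.exp (-z ^ 2 / 2))
        (Real.exp (-t ^ 2 / 2) * (-(2 * t) / 2)) t := by
      have := (((hasDerivAt_id t).pow 2).neg.div_const 2).exp
      simpa using this
    rw [logDeriv_apply, h.deriv, mul_div_cancel_left₀ _ (Real.exp_pos _).ne']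
    ring
  rw [← logDeriv_apply, hf, logDeriv_const_mul _ _ hc.ne', logDeriv_mul
    (f := fun z => (∏ i ∈ Finset.Icc 1 l, (z - r i)) ^ 2)
    (g := fun z => Real.exp (-z ^ 2 / 2)) t
    (pow_ne_zero 2 (Finset.prod_ne_zero_iff.2 hne)) (Real.exp_pos _).ne'
    (hdp.pow 2) (by fun_prop), logDeriv_fun_pow hdp,
    logDeriv_prod hne (fun i _ => by fun_prop), hexp]
  simp [logDeriv_apply, sub_eq_add_neg]

lemma ratio_lt {l : ℕ} {c : ℝ} (hc : 0 < c) {r : ℕ → ℝ} (hr : ZeroEnum (heFun l c) l r)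
    {a b : ℝ} (hab : a < b) (ha : heFun l c a ≠ 0) (hb : heFun l c b ≠ 0)
    (hsep : ∀ i ∈ Finset.Icc 1 l, a < r i ↔ b < r i) :
    deriv (heFun l c) b / heFun l c b < deriv (heFun l c) a / heFun l c a := by
  rw [ratio_eq hc hr ha, ratio_eq hc hr hb]
  have : ∑ i ∈ Finset.Icc 1 l, 1 / (b - r i) ≤ ∑ i ∈ Finset.Icc 1 l, 1 / (a - r i) := by
    refine Finset.sum_le_sum fun i hi => ?_
    have hne : r i ≠ a := fun h => ha ((heFun_eq_zero_iff hr a).2 ⟨i, hi, h⟩)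
    rcases lt_or_gt_of_ne hne with h | h
    · exact one_div_le_one_div_of_le (by linarith) (by linarith)
    · have := (hsep i hi).1 h
      exact one_div_le_one_div_of_neg_of_le (by linarith) (by linarith)
  linarith

lemma IsMIW.lt {f : ℝ → ℝ} {N : ℕ} {x : ℕ → ℝ} (hx : IsMIW f N x) {m n : ℕ} (hm : 1 ≤ m)
    (hmn : m < n) (hn : n ≤ N) : x m < x n := by
  induction n, hmn using Nat.le_induction with
  | base => exact hx.1 m hm hn
  | succ k hk ih => exact (ih (by omega)).trans (hx.1 k (by omega) hn)

/-- The number of points to the left of the `i`-th zero is the sum of the first `i` region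
counts. -/
lemma ncard_lt_zero {l : ℕ} {c : ℝ} {r : ℕ → ℝ} (hr : ZeroEnum (heFun l c) l r)
    {N : ℕ} {x : ℕ → ℝ} (hx : IsMIW (heFun l c) N x) {i : ℕ} (h1 : 1 ≤ i) (hi : i ≤ l) :
    {n | n ∈ Set.Icc 1 N ∧ x n < r i}.ncard = ∑ k ∈ Finset.range i, regionCount l r N x k := by
  induction i, h1 using Nat.le_induction with
  | base =>
    have : (0 : ℕ) ≠ l := by omega
    simp [regionCount, InRegion, this]
  | succ i h1 ih =>
    have hlt := hr.1 i (i + 1) h1 (by omega) hi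
    have hU : {n | n ∈ Set.Icc 1 N ∧ x n < r (i + 1)} =
        {n | n ∈ Set.Icc 1 N ∧ x n < r i} ∪ {n | n ∈ Set.Icc 1 N ∧ InRegion l r i (x n)} := by
      ext n
      have hi0 : i ≠ 0 := by omega
      have hil : i ≠ l := by omega
      simp only [InRegion, hi0, hil, false_or, Set.mem_union, Set.mem_ofPred_eq, ← and_or_left]
      refine and_congr_right fun hn => ⟨fun h => ?_, fun h => ?_⟩
      · have hne : x n ≠ r i := fun h => hx.2.1 n hn.1 hn.2
          ((heFun_eq_zero_iff hr _).2 ⟨i, Finset.mem_Icc.2 ⟨h1, by omega⟩, h.symm⟩)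
        exact (lt_or_gt_of_ne hne).imp id fun h' => ⟨h', h⟩
      · exact h.elim (fun h => h.trans hlt) And.right
    have hdisj : Disjoint {n | n ∈ Set.Icc 1 N ∧ x n < r i}
        {n | n ∈ Set.Icc 1 N ∧ InRegion l r i (x n)} := by
      rw [Set.disjoint_left]
      rintro n ⟨-, hn⟩ ⟨-, h, -⟩
      rcases h with h | h
      · omega
      · exact lt_asymm hn h
    rw [hU, Set.ncard_union_eq hdisj ((Set.finite_Icc 1 N).subset fun n h => h.1)
      ((Set.finite_Icc 1 N).subset fun n h => h.1), ih (by omega), Finset.sum_range_succ]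
    rfl

/-- Corresponding points of two sequences with equal region counts are not separated by a
zero. -/
lemma lt_zero_iff {l : ℕ} {c : ℝ} {r : ℕ → ℝ} (hr : ZeroEnum (heFun l c) l r)
    {N : ℕ} {x y : ℕ → ℝ} (hx : IsMIW (heFun l c) N x) (hy : IsMIW (heFun l c) N y)
    (hcount : ∀ k ≤ l, regionCount l r N x k = regionCount l r N y k)
    {i n : ℕ} (hi : i ∈ Finset.Icc 1 l) (hn1 : 1 ≤ n) (hnN : n ≤ N) :
    x n < r i ↔ y n < r i := by
  obtain ⟨h1, hil⟩ := Finset.mem_Icc.1 hi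
  have hcard : {n | n ∈ Set.Icc 1 N ∧ x n < r i}.ncard =
      {n | n ∈ Set.Icc 1 N ∧ y n < r i}.ncard := by
    rw [ncard_lt_zero hr hx h1 hil, ncard_lt_zero hr hy h1 hil]
    refine Finset.sum_congr rfl fun k hk => hcount k ?_
    have := Finset.mem_range.1 hk
    omega
  -- Both index sets are initial segments, so if `n` lies in the one for `u` but not in the one
  -- for `v`, the latter is strictly contained in the former, against equality of cardinalities.
  have key : ∀ {u v : ℕ → ℝ}, IsMIW (heFun l c) N v →
      {n | n ∈ Set.Icc 1 N ∧ u n < r i}.ncard = {n | n ∈ Set.Icc 1 N ∧ v n < r i}.ncard →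
      IsMIW (heFun l c) N u → u n < r i → v n < r i := by
    intro u v hv hcd hu hun
    by_contra hvn
    have hsub : {n | n ∈ Set.Icc 1 N ∧ v n < r i} ⊂ {n | n ∈ Set.Icc 1 N ∧ u n < r i} := by
      refine ⟨?_, fun h => hvn (h ⟨⟨hn1, hnN⟩, hun⟩).2⟩
      rintro m ⟨hm, hvm⟩
      have hmn : m < n := by
        by_contra hle
        rcases (not_lt.1 hle).eq_or_lt with rfl | h
        · exact hvn hvm
        · exact hvn ((hv.lt hn1 h hm.2).trans hvm)
      exact ⟨hm, (hu.lt hm.1 hmn hnN).trans hun⟩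
    have := Set.ncard_lt_ncard hsub ((Set.finite_Icc 1 N).subset fun n h => h.1)
    omega
  exact ⟨key hy hcard hx, key hx hcard.symm hy⟩

theorem MIW_comparison (l : ℕ) (c : ℝ) (hc : IsNormalizing l c)
    (r : ℕ → ℝ) (hr : ZeroEnum (heFun l c) l r)
    (N : ℕ) (x y : ℕ → ℝ)
    (hx : IsMIW (heFun l c) N x) (hy : IsMIW (heFun l c) N y)
    (hlx : LeftBC (heFun l c) x) (hly : LeftBC (heFun l c) y)
    (hrx : ∃ b, RightBCAt (heFun l c) N x b)
    (hry : ∃ b, RightBCAt (heFun l c) N y b)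
    (hcount : ∀ k ≤ l, 1 ≤ regionCount l r N x k ∧
      regionCount l r N x k = regionCount l r N y k) :
    (x 1 < y 1 →
      (∀ n, 1 ≤ n → n < N → x (n + 1) - x n < y (n + 1) - y n) ∧
      ∀ n, 1 ≤ n → n ≤ N → x n < y n) ∧
    (x 1 = y 1 → ∀ n, 1 ≤ n → n ≤ N → x n = y n) := by
  have hlt : ∀ n, 1 ≤ n → n ≤ N → x n < y n →
      deriv (heFun l c) (y n) / heFun l c (y n) < deriv (heFun l c) (x n) / heFun l c (x n) :=
    fun n h1 h2 h => ratio_lt hc.1 hr h (hx.2.1 n h1 h2) (hy.2.1 n h1 h2) fun i hi =>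
      lt_zero_iff hr hx hy (fun k hk => (hcount k hk).2) hi h1 h2
  constructor
  · intro h0
    have main : ∀ n, 1 ≤ n → n < N → x n < y n ∧ x (n + 1) - x n < y (n + 1) - y n := by
      intro n h1
      induction n, h1 using Nat.le_induction with
      | base =>
        intro hN
        have := hlt 1 le_rfl hN.le h0
        rw [← hlx, ← hly] at this
        exact ⟨h0, lt_of_one_div_lt_one_div (sub_pos.2 (hy.1 1 le_rfl hN)) this⟩
      | succ n h1 ih =>
        intro hN
        obtain ⟨ha, hb⟩ := ih (by omega)
        have hxy : x (n + 1) < y (n + 1) := by linarith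
        have h := hlt (n + 1) (by omega) hN.le hxy
        rw [← hx.2.2 (n + 1) (by omega) hN, ← hy.2.2 (n + 1) (by omega) hN,
          Nat.add_sub_cancel] at h
        have hg := one_div_lt_one_div_of_lt (sub_pos.2 (hx.1 n h1 (by omega))) hb
        exact ⟨hxy, lt_of_one_div_lt_one_div (sub_pos.2 (hy.1 (n + 1) (by omega) hN))
          (by linarith)⟩
    refine ⟨fun n h1 h2 => (main n h1 h2).2, fun n h1 h2 => ?_⟩
    rcases h1.eq_or_lt with rfl | h1
    · exact h0
    · obtain ⟨m, rfl⟩ : ∃ m, n = m + 1 := ⟨n - 1, by omega⟩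
      have := main m (by omega) (by omega)
      linarith
  · intro h0
    have main : ∀ n, 1 ≤ n → n < N → x n = y n ∧ x (n + 1) = y (n + 1) := by
      intro n h1
      induction n, h1 using Nat.le_induction with
      | base =>
        intro hN
        have h : 1 / (x 2 - x 1) = 1 / (y 2 - y 1) := by rw [hlx, hly, h0]
        rw [one_div, one_div, inv_inj] at h
        exact ⟨h0, by norm_num; linarith⟩
      | succ n h1 ih =>
        intro hN
        obtain ⟨ha, hb⟩ := ih (by omega)
        have h := hx.2.2 (n + 1) (by omega) hN
        rw [hb, ← hy.2.2 (n + 1) (by omega) hN, Nat.add_sub_cancel, ha, sub_left_inj,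
          one_div, one_div, inv_inj] at h
        exact ⟨hb, by linarith⟩
    intro n h1 h2
    rcases h1.eq_or_lt with rfl | h1
    · exact h0
    · obtain ⟨m, rfl⟩ : ∃ m, n = m + 1 := ⟨n - 1, by omega⟩
      exact (main m (by omega) (by omega)).2
end
end

section
/- Let f be a higher energy function and let u < v be two consecutive zeros of f, so that f is strictly positive on the finite interval (u,v). For each N ≥ 2, let (x_n^{(N)})_{n=1}^N be a strictly increasing sequence in (u,v) satisfying 1/(x_{n+1}−x_n) − 1/(x_n−x_{n−1}) = f'(x_n)/f(x_n) for 1 < n < N, together with a left boundary condition 1/(x_2−x_1) − 1/(x_1−x_0) = f'(x_1)/f(x_1) for some boundary point x_0 ≤ u and a right boundary condition 1/(x_{N+1}−x_N) − 1/(x_N−x_{N−1}) = f'(x_N)/f(x_N) for some boundary point x_{N+1} ≥ v (with the convention that the reciprocal term vanishes if the boundary point is infinite). Then x_1^{(N)} → u and x_N^{(N)} → v as N → ∞. -/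
/-!
On `(u, v)` the score `f' / f` equals `2 P' / P - t` with `P` a Hermite polynomial. Factoring out the
root at an endpoint `w`, `P' / P` is `m / (t - w)` plus a bounded function near `w`, with `m ≥ 0`
(`logDeriv_bound`). The singular term has a favourable sign: the score is bounded above on
`[u + δ, v)` and bounded below on `(u, v - δ]`.

If `x_1 ≥ u + δ`, the left boundary condition bounds `1 / (x_2 - x_1)`, and the recursion then lets
the reciprocal gap grow by at most a constant at each step. Hence the `i`-th gap is at least
`1 / (M (i + 1))`, and the divergence of the harmonic series forces the sum of the gaps above
`v - u` once `N` is large (`gaps_exceed`). The right endpoint is treated in the same way, reading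
the gaps from right to left.
-/

open MeasureTheory Filter Set

noncomputable section

/-- Positive gaps whose reciprocals start at most `M` and grow by at most `M` per step have a total
length that exceeds any `L` once there are enough of them, uniformly in the gap sequence. -/
lemma gaps_exceed (M L : ℝ) (hM : 0 < M) : ∃ K0 : ℕ, ∀ K ≥ K0, ∀ d : ℕ → ℝ,
    (∀ i < K, 0 < d i) → (0 < K → 1 / d 0 ≤ M) →
    (∀ i, i + 1 < K → 1 / d (i + 1) ≤ 1 / d i + M) → L < ∑ i ∈ Finset.range K, d i := by
  have hdiv := Real.tendsto_sum_range_one_div_nat_succ_atTop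
  obtain ⟨K0, hK0⟩ := eventually_atTop.1 (hdiv.eventually (eventually_gt_atTop (L * M)))
  refine ⟨K0, fun K hK d hd h0 hs => ?_⟩
  have hb : ∀ i, i < K → 1 / d i ≤ M * ((i : ℝ) + 1) := by
    intro i
    induction i with
    | zero => intro h; simpa using h0 h
    | succ i ih =>
      intro h
      have h1 := ih (by omega)
      have h2 := hs i h
      push_cast
      linarith
  have hle : ∑ i ∈ Finset.range K, 1 / ((i : ℝ) + 1) ≤ (∑ i ∈ Finset.range K, d i) * M := by
    rw [Finset.sum_mul]
    refine Finset.sum_le_sum fun i hi => ?_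
    have hi := Finset.mem_range.1 hi
    have hdi := hd i hi
    have h1 := hb i hi
    rw [div_le_iff₀ hdi] at h1
    rw [div_le_iff₀ (by positivity)]
    linarith
  have := hK0 K hK
  exact lt_of_mul_lt_mul_right (this.trans_le hle) hM.le

/-- The Hermite polynomial of order `l` with real coefficients. -/
def hermiteR (l : ℕ) : Polynomial ℝ := (Polynomial.hermite l).map (Int.castRingHom ℝ)

lemma hermiteR_ne_zero (l : ℕ) : hermiteR l ≠ 0 :=
  ((Polynomial.hermite_monic l).map _).ne_zero

lemma hermiteFun_eq_s7 (l : ℕ) (t : ℝ) : hermiteFun l t = (hermiteR l).eval t := by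
  have h := Polynomial.hermite_eq_deriv_gaussian' l t
  rw [Polynomial.aeval_def, ← Polynomial.eval_map] at h
  have h2 : (hermiteR l).eval t = _ := h
  rw [h2, hermiteFun, iteratedDeriv_eq_iterate]
  simp only [neg_div]
  ring

lemma heFun_eq (l : ℕ) (c : ℝ) :
    heFun l c = fun t => c * (hermiteR l).eval t ^ 2 * Real.exp (-t ^ 2 / 2) := by
  funext t
  rw [heFun, hermiteFun_eq_s7]

lemma score_eq_s7 (l : ℕ) (c t : ℝ) (ht : heFun l c t ≠ 0) :
    deriv (heFun l c) t / heFun l c t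
      = 2 * ((hermiteR l).derivative.eval t / (hermiteR l).eval t) - t := by
  have hP := (hermiteR l).hasDerivAt t
  have hE : HasDerivAt (fun t : ℝ => Real.exp (-t ^ 2 / 2))
      (Real.exp (-t ^ 2 / 2) * (-t)) t := by
    have h1 : HasDerivAt (fun t : ℝ => -t ^ 2 / 2) (-t) t := by
      have := ((hasDerivAt_pow 2 t).neg).div_const 2
      exact this.congr_deriv (by simp; ring)
    exact h1.exp
  have hd' : deriv (heFun l c) t
      = c * (2 * (hermiteR l).eval t * (hermiteR l).derivative.eval t) * Real.exp (-t ^ 2 / 2)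
        + c * (hermiteR l).eval t ^ 2 * (Real.exp (-t ^ 2 / 2) * (-t)) := by
    rw [heFun_eq]
    exact ((((hP.pow 2).const_mul c).mul hE).congr_deriv (by simp)).deriv
  rw [hd']
  rw [heFun_eq] at ht ⊢
  have he := Real.exp_ne_zero (-t ^ 2 / 2)
  have hc : c ≠ 0 := by rintro rfl; simp at ht
  have hp : (hermiteR l).eval t ≠ 0 := by intro h; simp [h] at ht
  field_simp
  ring

/-- The logarithmic derivative of a polynomial whose only possible root in `[a, b]` is `w` differs
there from `m / (t - w)`, `m` being the multiplicity of `w`, by a bounded function. -/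
lemma logDeriv_bound (P : Polynomial ℝ) (hP : P ≠ 0) (a b w : ℝ)
    (h : ∀ t ∈ Set.Icc a b, t ≠ w → P.eval t ≠ 0) :
    ∃ (m : ℕ) (G : ℝ), ∀ t ∈ Set.Icc a b, t ≠ w →
      |P.derivative.eval t / P.eval t - m / (t - w)| ≤ G := by
  obtain ⟨Q, hQ, hnd⟩ := Polynomial.exists_eq_pow_rootMultiplicity_mul_and_not_dvd P hP w
  set m := P.rootMultiplicity w
  have hQw : Q.eval w ≠ 0 := fun h0 => hnd (Polynomial.dvd_iff_isRoot.2 h0)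
  have hQt : ∀ t ∈ Set.Icc a b, Q.eval t ≠ 0 := by
    intro t ht h0
    by_cases hw : t = w
    · exact hQw (hw ▸ h0)
    · apply h t ht hw
      rw [hQ]
      simp [h0]
  obtain ⟨G, hG⟩ := isCompact_Icc.exists_bound_of_continuousOn
    (f := fun t => Q.derivative.eval t / Q.eval t)
    (Q.derivative.continuous.continuousOn.div Q.continuous.continuousOn hQt)
  refine ⟨m, G, fun t ht hw => ?_⟩
  have key : P.derivative.eval t / P.eval t - m / (t - w)
      = Q.derivative.eval t / Q.eval t := by
    have h1 : t - w ≠ 0 := sub_ne_zero.2 hw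
    have h2 := hQt t ht
    clear_value m
    rw [hQ]
    simp only [Polynomial.derivative_mul, Polynomial.derivative_X_sub_C_pow,
      Polynomial.eval_add, Polynomial.eval_mul, Polynomial.eval_pow, Polynomial.eval_sub,
      Polynomial.eval_X, Polynomial.eval_C]
    rcases m with _ | k
    · simp
    · simp only [Nat.add_sub_cancel]
      field_simp
      ring
  rw [key]
  exact hG t ht

/-- The score is bounded above away from the left zero. -/
lemma score_le (l : ℕ) (c u v δ : ℝ) (hδ : 0 < δ)
    (hpos : ∀ t ∈ Set.Ioo u v, 0 < heFun l c t) :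
    ∃ G : ℝ, ∀ t ∈ Set.Ioo u v, u + δ ≤ t → deriv (heFun l c) t / heFun l c t ≤ G := by
  obtain ⟨m, G, hG⟩ := logDeriv_bound (hermiteR l) (hermiteR_ne_zero l) (u + δ) v v (by
    intro t ht hw h0
    have := hpos t ⟨by linarith [ht.1], lt_of_le_of_ne ht.2 hw⟩
    rw [heFun_eq] at this
    simp [h0] at this)
  refine ⟨2 * G - (u + δ), fun t ht hut => ?_⟩
  rw [score_eq_s7 l c t (hpos t ht).ne']
  have h1 := (abs_le.1 (hG t ⟨hut, ht.2.le⟩ ht.2.ne)).2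
  have h2 : (m : ℝ) / (t - v) ≤ 0 :=
    div_nonpos_of_nonneg_of_nonpos (by positivity) (by linarith [ht.2])
  linarith

/-- The score is bounded below away from the right zero. -/
lemma le_score (l : ℕ) (c u v δ : ℝ) (hδ : 0 < δ)
    (hpos : ∀ t ∈ Set.Ioo u v, 0 < heFun l c t) :
    ∃ G : ℝ, ∀ t ∈ Set.Ioo u v, t ≤ v - δ → -G ≤ deriv (heFun l c) t / heFun l c t := by
  obtain ⟨m, G, hG⟩ := logDeriv_bound (hermiteR l) (hermiteR_ne_zero l) u (v - δ) u (by
    intro t ht hw h0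
    have := hpos t ⟨lt_of_le_of_ne ht.1 hw.symm, by linarith [ht.2]⟩
    rw [heFun_eq] at this
    simp [h0] at this)
  refine ⟨2 * G + (v - δ), fun t ht hut => ?_⟩
  rw [score_eq_s7 l c t (hpos t ht).ne']
  have h1 := (abs_le.1 (hG t ⟨ht.1.le, hut⟩ ht.1.ne')).1
  have h2 : 0 ≤ (m : ℝ) / (t - u) := div_nonneg (by positivity) (by linarith [ht.1])
  linarith

theorem MIW_endpoints_to_consecutive_zeros (l : ℕ) (c : ℝ) (hc : IsNormalizing l c)
    (u v : ℝ) (huv : u < v)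
    (hu : heFun l c u = 0) (hv : heFun l c v = 0)
    (hpos : ∀ t ∈ Set.Ioo u v, 0 < heFun l c t)
    (x : ℕ → ℕ → ℝ)
    (hx : ∀ N, 2 ≤ N →
      (∀ n, 1 ≤ n → n ≤ N → x N n ∈ Set.Ioo u v) ∧
      (∀ n, 1 ≤ n → n < N → x N n < x N (n + 1)) ∧
      (∀ n, 1 < n → n < N →
        1 / (x N (n + 1) - x N n) - 1 / (x N n - x N (n - 1))
          = deriv (heFun l c) (x N n) / heFun l c (x N n)) ∧
      (1 / (x N 2 - x N 1) = deriv (heFun l c) (x N 1) / heFun l c (x N 1) ∨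
        ∃ x0 ≤ u, 1 / (x N 2 - x N 1) - 1 / (x N 1 - x0)
          = deriv (heFun l c) (x N 1) / heFun l c (x N 1)) ∧
      (-(1 / (x N N - x N (N - 1)))
          = deriv (heFun l c) (x N N) / heFun l c (x N N) ∨
        ∃ xb : ℝ, v ≤ xb ∧ 1 / (xb - x N N) - 1 / (x N N - x N (N - 1))
          = deriv (heFun l c) (x N N) / heFun l c (x N N))) :
    Tendsto (fun N => x N 1) atTop (nhds u) ∧
    Tendsto (fun N => x N N) atTop (nhds v) := by
  constructor
  · have hmem : ∀ N, 2 ≤ N → x N 1 ∈ Set.Ioo u v := fun N hN => (hx N hN).1 1 le_rfl (by omega)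
    rw [Metric.tendsto_atTop]
    intro δ hδ
    obtain ⟨G, hG⟩ := score_le l c u v δ hδ hpos
    set M := |G| + 1 / δ
    have hM : 0 < M := by positivity
    have hGM : G + 1 / δ ≤ M := by simp only [M]; linarith [le_abs_self G]
    have hGM' : G ≤ M := by linarith [one_div_pos.2 hδ]
    obtain ⟨K0, hK0⟩ := gaps_exceed M (v - u) hM
    refine ⟨K0 + 2, fun N hN => ?_⟩
    have hN2 : 2 ≤ N := by omega
    obtain ⟨hin, hlt, hrec, hL, -⟩ := hx N hN2
    rw [Real.dist_eq, abs_of_pos (by linarith [(hmem N hN2).1])]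
    by_contra! hcon
    have hge : ∀ n, n + 1 ≤ N → u + δ ≤ x N (n + 1) := by
      intro n
      induction n with
      | zero => intro _; simp only [zero_add]; linarith
      | succ n ih =>
        intro h
        linarith [ih (by omega), hlt (n + 1) (by omega) (by omega)]
    have hsum := hK0 (N - 1) (by omega) (fun i => x N (i + 2) - x N (i + 1))
      (fun i hi => by linarith [hlt (i + 1) (by omega) (by omega)])
      (fun _ => by
        have hg := hG (x N 1) (hmem N hN2) (by linarith)
        simp only [zero_add]
        rcases hL with h | ⟨x0, hx0, h⟩
        · linarith
        · have : 1 / (x N 1 - x0) ≤ 1 / δ := one_div_le_one_div_of_le hδ (by linarith)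
          linarith)
      (fun i hi => by
        have hg := hG (x N (i + 2)) (hin _ (by omega) (by omega)) (hge (i + 1) (by omega))
        have hr := hrec (i + 2) (by omega) (by omega)
        simp only [Nat.add_succ_sub_one] at hr
        rw [show i + 1 + 2 = i + 2 + 1 by ring, show i + 1 + 1 = i + 2 by ring]
        linarith)
    rw [Finset.sum_range_sub (fun i => x N (i + 1))] at hsum
    rw [show N - 1 + 1 = N by omega, zero_add] at hsum
    linarith [(hmem N hN2).1, (hin N (by omega) le_rfl).2]
  · have hmem : ∀ N, 2 ≤ N → x N N ∈ Set.Ioo u v := fun N hN => (hx N hN).1 N (by omega) le_rfl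
    rw [Metric.tendsto_atTop]
    intro δ hδ
    obtain ⟨G, hG⟩ := le_score l c u v δ hδ hpos
    set M := |G| + 1 / δ
    have hM : 0 < M := by positivity
    have hGM : G + 1 / δ ≤ M := by simp only [M]; linarith [le_abs_self G]
    have hGM' : G ≤ M := by linarith [one_div_pos.2 hδ]
    obtain ⟨K0, hK0⟩ := gaps_exceed M (v - u) hM
    refine ⟨K0 + 2, fun N hN => ?_⟩
    have hN2 : 2 ≤ N := by omega
    obtain ⟨hin, hlt, hrec, -, hR⟩ := hx N hN2
    rw [Real.dist_eq, abs_sub_comm, abs_of_pos (by linarith [(hmem N hN2).2])]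
    by_contra! hcon
    have hge : ∀ n, n < N → x N (N - n) ≤ v - δ := by
      intro n
      induction n with
      | zero => intro _; simp only [Nat.sub_zero]; linarith
      | succ n ih =>
        intro h
        have h1 := hlt (N - (n + 1)) (by omega) (by omega)
        rw [show N - (n + 1) + 1 = N - n by omega] at h1
        linarith [ih (by omega)]
    -- The `i`-th gap counted from the right end.
    have hsum := hK0 (N - 1) (by omega) (fun i => x N (N - i) - x N (N - (i + 1)))
      (fun i hi => by
        have h1 := hlt (N - (i + 1)) (by omega) (by omega)
        rw [show N - (i + 1) + 1 = N - i by omega] at h1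
        linarith)
      (fun _ => by
        have hg := hG (x N N) (hmem N hN2) (by linarith)
        simp only [zero_add, Nat.sub_zero]
        rcases hR with h | ⟨xb, hxb, h⟩
        · linarith
        · have : 1 / (xb - x N N) ≤ 1 / δ := one_div_le_one_div_of_le hδ (by linarith)
          linarith)
      (fun i hi => by
        have hg := hG (x N (N - (i + 1))) (hin _ (by omega) (by omega)) (hge (i + 1) (by omega))
        have hr := hrec (N - (i + 1)) (by omega) (by omega)
        rw [show N - (i + 1) + 1 = N - i by omega,
          show N - (i + 1) - 1 = N - (i + 1 + 1) by omega] at hr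
        linarith)
    rw [Finset.sum_range_sub' (fun i => x N (N - i))] at hsum
    rw [show N - (N - 1) = 1 by omega, Nat.sub_zero] at hsum
    linarith [(hmem N hN2).2, (hin 1 le_rfl (by omega)).1]
end
end
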